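/- arXiv:1312.7815 — 6 statements merged into one kernel-verified Lean document; each statement's English description precedes it below -/
import Mathlib

section
/- Let f be continuous on [u, v] with u < v, and let ℓ be an affine function such that the error ε = f − ℓ has only finitely many zeros in [u, v], at each of which ε changes sign. Then ℓ minimizes ∫_u^v |f(x) − q(x)| dx over all affine functions q if and only if ∫_u^v sign(f(x) − ℓ(x)) · q(x) dx = 0 for every affine function q, where sign(t) = 1 for t > 0, sign(t) = −1 for t < 0, and sign(0) = 0. -/
/-- `ε` changes sign at `z` (relative to the interval `[u, v]`): on some punctured
neighbourhood of `z` intersected with `[u, v]`, `ε` is (strictly) positive on one side of `z`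
and (strictly) negative on the other side. -/
def ChangesSignAt (ε : ℝ → ℝ) (u v z : ℝ) : Prop :=
  ∃ δ > 0,
    ((∀ x ∈ Set.Ioo (z - δ) z ∩ Set.Icc u v, 0 < ε x) ∧
        (∀ x ∈ Set.Ioo z (z + δ) ∩ Set.Icc u v, ε x < 0)) ∨
      ((∀ x ∈ Set.Ioo (z - δ) z ∩ Set.Icc u v, ε x < 0) ∧
        (∀ x ∈ Set.Ioo z (z + δ) ∩ Set.Icc u v, 0 < ε x))

/-!
Let `e` be the error of the candidate. For a direction `q`, the derivative of `t ↦ ∫ |e - t * q|`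
at `0` is `-∫ sign e * q`, because `|·|` is differentiable off `0` and `e` vanishes only on a null
set; so a minimizer has an error whose sign is orthogonal to every direction. Conversely
`|e| - sign e * q ≤ |e - q|` pointwise, and integrating this against an orthogonal `q` shows that no
direction decreases the integral.
-/

open MeasureTheory Filter Set

section RealSign

theorem real_sign_eq_coe_sign (x : ℝ) : Real.sign x = (SignType.sign x : ℝ) := by
  rcases lt_trichotomy x 0 with hx | rfl | hx
  · simp [Real.sign_of_neg hx, hx]
  · simp
  · simp [Real.sign_of_pos hx, hx]

theorem measurable_real_sign : Measurable Real.sign :=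
  Measurable.ite measurableSet_Iio measurable_const
    (Measurable.ite measurableSet_Ioi measurable_const measurable_const)

theorem abs_real_sign_le_one (x : ℝ) : |Real.sign x| ≤ 1 := by
  rcases Real.sign_apply_eq x with hx | hx | hx <;> simp [hx]

theorem real_sign_mul_self (x : ℝ) : Real.sign x * x = |x| := by
  rw [real_sign_eq_coe_sign, sign_mul_self]

theorem real_sign_mul_le_abs (x y : ℝ) : Real.sign x * y ≤ |y| :=
  calc Real.sign x * y ≤ |Real.sign x| * |y| := (le_abs_self _).trans_eq (abs_mul _ _)
    _ ≤ |y| := mul_le_of_le_one_left (abs_nonneg y) (abs_real_sign_le_one x)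

theorem abs_sub_real_sign_mul_le_abs_sub (x y : ℝ) : |x| - Real.sign x * y ≤ |x - y| :=
  calc |x| - Real.sign x * y = Real.sign x * (x - y) := by rw [mul_sub, real_sign_mul_self]
    _ ≤ |x - y| := real_sign_mul_le_abs x (x - y)

theorem hasDerivAt_abs_sub_mul {x : ℝ} (hx : x ≠ 0) (y : ℝ) :
    HasDerivAt (fun t : ℝ ↦ |x - t * y|) (-(Real.sign x * y)) 0 := by
  have hline : HasDerivAt (fun t : ℝ ↦ x - t * y) (-y) 0 := by
    simpa using ((hasDerivAt_id (0 : ℝ)).mul_const y).const_sub x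
  have habs : HasDerivAt (|·|) (Real.sign x) (x - 0 * y) := by
    simpa [real_sign_eq_coe_sign] using hasDerivAt_abs hx
  exact (habs.comp 0 hline).congr_deriv (mul_neg _ _)

end RealSign

section SignOrthogonality

variable {X : Type*} [MeasurableSpace X] {μ : Measure X} {e q : X → ℝ}

theorem aestronglyMeasurable_real_sign_comp (he : AEStronglyMeasurable e μ) :
    AEStronglyMeasurable (fun x ↦ Real.sign (e x)) μ :=
  (measurable_real_sign.comp_aemeasurable he.aemeasurable).aestronglyMeasurable

theorem integrable_real_sign_mul (he : AEStronglyMeasurable e μ) (hq : Integrable q μ) :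
    Integrable (fun x ↦ Real.sign (e x) * q x) μ :=
  hq.bdd_mul (aestronglyMeasurable_real_sign_comp he)
    (ae_of_all μ fun x ↦ abs_real_sign_le_one (e x))

theorem integral_abs_le_integral_abs_sub_of_integral_sign_mul_eq_zero
    (he : Integrable e μ) (hq : Integrable q μ) (horth : ∫ x, Real.sign (e x) * q x ∂μ = 0) :
    ∫ x, |e x| ∂μ ≤ ∫ x, |e x - q x| ∂μ := by
  have hsign := integrable_real_sign_mul he.aestronglyMeasurable hq
  calc ∫ x, |e x| ∂μ = ∫ x, (|e x| - Real.sign (e x) * q x) ∂μ := by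
        rw [integral_sub he.abs hsign, horth, sub_zero]
    _ ≤ ∫ x, |e x - q x| ∂μ :=
        integral_mono (he.abs.sub hsign) (he.sub hq).abs
          fun x ↦ abs_sub_real_sign_mul_le_abs_sub (e x) (q x)

theorem hasDerivAt_integral_abs_sub_mul (he : Integrable e μ) (hq : Integrable q μ)
    (hne : ∀ᵐ x ∂μ, e x ≠ 0) :
    HasDerivAt (fun t : ℝ ↦ ∫ x, |e x - t * q x| ∂μ) (-∫ x, Real.sign (e x) * q x ∂μ) 0 := by
  have hlip (x : X) :
      LipschitzOnWith (Real.nnabs |q x|) (fun t : ℝ ↦ |e x - t * q x|) univ := by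
    refine LipschitzOnWith.of_dist_le_mul fun s _ t _ ↦ ?_
    calc |(|e x - s * q x| - |e x - t * q x|)|
        ≤ |(e x - s * q x) - (e x - t * q x)| := abs_abs_sub_abs_le_abs_sub _ _
      _ = |q x * (t - s)| := by ring_nf
      _ = Real.nnabs |q x| * dist s t := by
        rw [abs_mul, Real.coe_nnabs, abs_abs, Real.dist_eq, abs_sub_comm s t]
  rw [← integral_neg]
  exact (hasDerivAt_integral_of_dominated_loc_of_lip univ_mem
    (Eventually.of_forall fun t ↦ (he.sub (hq.const_mul t)).abs.aestronglyMeasurable)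
    (by simpa using he.abs)
    (integrable_real_sign_mul he.aestronglyMeasurable hq).neg.aestronglyMeasurable
    (ae_of_all μ hlip) hq.abs
    (hne.mono fun x hx ↦ hasDerivAt_abs_sub_mul hx (q x))).2

theorem integral_sign_mul_eq_zero_of_isLocalMin (he : Integrable e μ) (hq : Integrable q μ)
    (hne : ∀ᵐ x ∂μ, e x ≠ 0) (hmin : IsLocalMin (fun t : ℝ ↦ ∫ x, |e x - t * q x| ∂μ) 0) :
    ∫ x, Real.sign (e x) * q x ∂μ = 0 :=
  neg_eq_zero.1 (hmin.hasDerivAt_eq_zero (hasDerivAt_integral_abs_sub_mul he hq hne))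

theorem isMinOn_integral_abs_sub_iff_integral_sign_mul_eq_zero {W : Submodule ℝ (X → ℝ)}
    (hW : ∀ q ∈ W, Integrable q μ) {f p : X → ℝ} (hf : Integrable f μ) (hp : p ∈ W)
    (hne : ∀ᵐ x ∂μ, f x - p x ≠ 0) :
    IsMinOn (fun q : X → ℝ ↦ ∫ x, |f x - q x| ∂μ) W p ↔
      ∀ q ∈ W, ∫ x, Real.sign (f x - p x) * q x ∂μ = 0 := by
  have he : Integrable (fun x ↦ f x - p x) μ := hf.sub (hW p hp)
  rw [isMinOn_iff]
  refine ⟨fun hmin q hq ↦ ?_, fun horth q hq ↦ ?_⟩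
  · refine integral_sign_mul_eq_zero_of_isLocalMin he (hW q hq) hne (.of_forall fun t ↦ ?_)
    simpa [sub_sub] using hmin (p + t • q) (W.add_mem hp (W.smul_mem t hq))
  · have hqp : q - p ∈ W := W.sub_mem hq hp
    simpa using
      integral_abs_le_integral_abs_sub_of_integral_sign_mul_eq_zero he (hW _ hqp) (horth _ hqp)

end SignOrthogonality

section Affine

/-- The space of affine functions on the real line, as the span of `x ↦ x` and `1` so that it is a
subspace of approximants inside `ℝ → ℝ`. -/
def affineFunctions : Submodule ℝ (ℝ → ℝ) :=
  Submodule.span ℝ {id, 1}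

theorem mem_affineFunctions {q : ℝ → ℝ} :
    q ∈ affineFunctions ↔ ∃ γ δ : ℝ, (fun x ↦ γ * x + δ) = q := by
  simp [affineFunctions, Submodule.mem_span_pair, funext_iff]

theorem forall_mem_affineFunctions {P : (ℝ → ℝ) → Prop} :
    (∀ q ∈ affineFunctions, P q) ↔ ∀ γ δ : ℝ, P fun x ↦ γ * x + δ := by
  refine ⟨fun h γ δ ↦ h _ (mem_affineFunctions.2 ⟨γ, δ, rfl⟩), fun h q hq ↦ ?_⟩
  obtain ⟨γ, δ, rfl⟩ := mem_affineFunctions.1 hq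
  exact h γ δ

theorem continuous_of_mem_affineFunctions {q : ℝ → ℝ} (hq : q ∈ affineFunctions) :
    Continuous q := by
  obtain ⟨γ, δ, rfl⟩ := mem_affineFunctions.1 hq
  fun_prop

end Affine

theorem best_L1_affine_iff_sign_orthogonal_general (μ : Measure ℝ) [IsLocallyFiniteMeasure μ]
    (u v : ℝ) (huv : u ≤ v) (f ℓ : ℝ → ℝ) (hf : IntervalIntegrable f μ u v)
    (α β : ℝ) (hℓ : ∀ x, ℓ x = α * x + β)
    (hzero : μ {x ∈ Ioc u v | f x - ℓ x = 0} = 0) :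
    (∀ γ δ : ℝ, (∫ x in u..v, |f x - ℓ x| ∂μ) ≤ ∫ x in u..v, |f x - (γ * x + δ)| ∂μ) ↔
      ∀ γ δ : ℝ, (∫ x in u..v, Real.sign (f x - ℓ x) * (γ * x + δ) ∂μ) = 0 := by
  have hℓ_mem : ℓ ∈ affineFunctions := mem_affineFunctions.2 ⟨α, β, (funext hℓ).symm⟩
  have hint (q : ℝ → ℝ) (hq : q ∈ affineFunctions) : IntegrableOn q (Ioc u v) μ :=
    ((continuous_of_mem_affineFunctions hq).intervalIntegrable u v).1
  have hne : ∀ᵐ x ∂μ.restrict (Ioc u v), f x - ℓ x ≠ 0 := by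
    rw [ae_restrict_iff' measurableSet_Ioc]
    filter_upwards [measure_eq_zero_iff_ae_notMem.1 hzero] with x hx hxI h
    exact hx ⟨hxI, h⟩
  have key := isMinOn_integral_abs_sub_iff_integral_sign_mul_eq_zero hint hf.1 hℓ_mem hne
  simpa only [isMinOn_iff, SetLike.mem_coe, forall_mem_affineFunctions,
    ← intervalIntegral.integral_of_le huv] using key

/-- **Kripke–Rivlin criterion.** Let `f` be continuous on `[u, v]` and `ℓ` affine such that
`ε = f - ℓ` has finitely many zeros in `[u, v]`, at each of which it changes sign. Then `ℓ` is
a best `L¹` affine approximation to `f` on `[u, v]` iff `∫_u^v sign(f - ℓ) q = 0` for every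
affine `q`. -/
theorem best_L1_affine_iff_sign_orthogonal (u v : ℝ) (huv : u < v) (f ℓ : ℝ → ℝ)
    (hf : ContinuousOn f (Set.Icc u v))
    (α β : ℝ) (hℓ : ∀ x, ℓ x = α * x + β)
    (hfin : {x ∈ Set.Icc u v | f x - ℓ x = 0}.Finite)
    (hsign : ∀ z ∈ Set.Icc u v, f z - ℓ z = 0 → ChangesSignAt (fun x => f x - ℓ x) u v z) :
    (∀ γ δ : ℝ, (∫ x in u..v, |f x - ℓ x|) ≤ ∫ x in u..v, |f x - (γ * x + δ)|) ↔
      (∀ γ δ : ℝ, (∫ x in u..v, Real.sign (f x - ℓ x) * (γ * x + δ)) = 0) :=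
  best_L1_affine_iff_sign_orthogonal_general volume u v huv.le f ℓ
    (hf.intervalIntegrable_of_Icc huv.le) α β hℓ
    (measure_mono_null (by gcongr; exact Ioc_subset_Icc_self) (hfin.measure_zero volume))
end

section
/- Let C, b, c be real numbers, let f(x) = (C/2)x² + bx + c, let u < v, and let h = v − u. Then the minimum of ∫_u^v |f(x) − ℓ(x)| dx over all affine functions ℓ equals |C| · h³ / 32. -/
/-!
A residual `r` is Birkhoff–James orthogonal in `L¹` to every `d` with `∫ sign r * d = 0`. Let `w` be
the monic quadratic with roots at `1/4` and `3/4` of the interval. Integrating against `sign w`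
kills affine functions, so the best affine approximation of `f` is the one whose residual is a
multiple of `w`, namely the interpolant of `f` at these two nodes.
-/

open MeasureTheory Set

section SignOrthogonality

variable {α : Type*} [MeasurableSpace α] {μ : Measure α} {r d : α → ℝ}

lemma measurable_coe_sign : Measurable fun x : ℝ ↦ (SignType.sign x : ℝ) := by
  simp only [sign_apply, apply_ite (SignType.cast : SignType → ℝ)]
  exact .ite measurableSet_Ioi measurable_const
    (.ite measurableSet_Iio measurable_const measurable_const)

lemma abs_signType_cast_le_one {R : Type*} [Ring R] [LinearOrder R] [IsStrictOrderedRing R]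
    (s : SignType) : |(s : R)| ≤ 1 := by
  cases s <;> simp

lemma integrable_sign_mul (hr : AEMeasurable r μ) (hd : Integrable d μ) :
    Integrable (fun x ↦ SignType.sign (r x) * d x) μ :=
  hd.bdd_mul (measurable_coe_sign.comp_aemeasurable hr).aestronglyMeasurable
    (.of_forall fun _ ↦ abs_signType_cast_le_one _)

theorem integral_abs_le_integral_abs_add_of_integral_sign_mul_eq_zero (hr : Integrable r μ)
    (hd : Integrable d μ) (horth : ∫ x, SignType.sign (r x) * d x ∂μ = 0) :
    ∫ x, |r x| ∂μ ≤ ∫ x, |r x + d x| ∂μ := by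
  have hsd := integrable_sign_mul hr.aemeasurable hd
  have pointwise (x : α) : |r x| + SignType.sign (r x) * d x ≤ |r x + d x| := calc
    |r x| + SignType.sign (r x) * d x = SignType.sign (r x) * (r x + d x) := by
      rw [mul_add, sign_mul_self]
    _ ≤ |(SignType.sign (r x) : ℝ)| * |r x + d x| := (le_abs_self _).trans (abs_mul _ _).le
    _ ≤ |r x + d x| := mul_le_of_le_one_left (abs_nonneg _) (abs_signType_cast_le_one _)
  calc
    ∫ x, |r x| ∂μ = ∫ x, (|r x| + SignType.sign (r x) * d x) ∂μ := by
      rw [integral_add hr.abs hsd, horth, add_zero]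
    _ ≤ ∫ x, |r x + d x| ∂μ := integral_mono (hr.abs.add hsd) (hr.add hd).abs pointwise

end SignOrthogonality

lemma integral_quadratic (A B D s t : ℝ) :
    ∫ x in s..t, (A * x ^ 2 + B * x + D) =
      A * (t ^ 3 - s ^ 3) / 3 + B * (t ^ 2 - s ^ 2) / 2 + D * (t - s) := by
  have hint {g : ℝ → ℝ} (hg : Continuous g) : IntervalIntegrable g volume s t :=
    hg.intervalIntegrable s t
  rw [intervalIntegral.integral_add (hint (by fun_prop)) (hint (by fun_prop)),
    intervalIntegral.integral_add (hint (by fun_prop)) (hint (by fun_prop)),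
    intervalIntegral.integral_const_mul, intervalIntegral.integral_const_mul, integral_pow,
    integral_id, intervalIntegral.integral_const, smul_eq_mul]
  ring

lemma integral_sign_mul_sub_mul_sub {μ : Measure ℝ} [NullSingletonClass μ] {u p q v : ℝ}
    (hup : u ≤ p) (hpq : p ≤ q) (hqv : q ≤ v) {g : ℝ → ℝ}
    (hg : IntervalIntegrable g μ u v) :
    ∫ x in u..v, SignType.sign ((x - p) * (x - q)) * g x ∂μ =
      (∫ x in u..p, g x ∂μ) - (∫ x in p..q, g x ∂μ) + ∫ x in q..v, g x ∂μ := by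
  have hint : IntervalIntegrable (fun x ↦ SignType.sign ((x - p) * (x - q)) * g x) μ u v :=
    ⟨integrable_sign_mul (by fun_prop) hg.1, integrable_sign_mul (by fun_prop) hg.2⟩
  have hint_sub {s t : ℝ} (hs : s ∈ uIcc u v) (ht : t ∈ uIcc u v) :=
    hint.mono_set (uIcc_subset_uIcc hs ht)
  have hu : u ∈ uIcc u v := left_mem_uIcc
  have hp : p ∈ uIcc u v := mem_uIcc_of_le hup (hpq.trans hqv)
  have hq : q ∈ uIcc u v := mem_uIcc_of_le (hup.trans hpq) hqv
  have hv : v ∈ uIcc u v := right_mem_uIcc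
  have left : ∫ x in u..p, SignType.sign ((x - p) * (x - q)) * g x ∂μ = ∫ x in u..p, g x ∂μ :=
    intervalIntegral.integral_congr_Ioo_of_le hup fun x hx ↦ by
      have : 0 < (x - p) * (x - q) :=
        mul_pos_of_neg_of_neg (by linarith [hx.2]) (by linarith [hx.2])
      simp [sign_pos this]
  have middle : ∫ x in p..q, SignType.sign ((x - p) * (x - q)) * g x ∂μ = -∫ x in p..q, g x ∂μ := by
    rw [← intervalIntegral.integral_neg]
    refine intervalIntegral.integral_congr_Ioo_of_le hpq fun x hx ↦ ?_
    have : (x - p) * (x - q) < 0 := mul_neg_of_pos_of_neg (by linarith [hx.1]) (by linarith [hx.2])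
    simp [sign_neg this]
  have right : ∫ x in q..v, SignType.sign ((x - p) * (x - q)) * g x ∂μ = ∫ x in q..v, g x ∂μ :=
    intervalIntegral.integral_congr_Ioo_of_le hqv fun x hx ↦ by
      have : 0 < (x - p) * (x - q) := mul_pos (by linarith [hx.1]) (by linarith [hx.1])
      simp [sign_pos this]
  rw [← intervalIntegral.integral_add_adjacent_intervals (hint_sub hu hq) (hint_sub hq hv),
    ← intervalIntegral.integral_add_adjacent_intervals (hint_sub hu hp) (hint_sub hp hq),
    left, middle, right, sub_eq_add_neg]

/-- The monic quadratic on `[u, v]` of least `L¹` norm. Its roots are the zeros `±1/2` of the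
Chebyshev polynomial of the second kind `U₂`, transported from `[-1, 1]` to `[u, v]`. -/
noncomputable def monicChebyshevU₂ (u v x : ℝ) : ℝ := (x - (3 * u + v) / 4) * (x - (u + 3 * v) / 4)

@[fun_prop]
lemma continuous_monicChebyshevU₂ (u v : ℝ) : Continuous (monicChebyshevU₂ u v) := by
  unfold monicChebyshevU₂
  fun_prop

section ChebyshevU₂

variable {u v : ℝ}

lemma integral_sign_monicChebyshevU₂_mul_quadratic (huv : u ≤ v) (A B D : ℝ) :
    ∫ x in u..v, SignType.sign (monicChebyshevU₂ u v x) * (A * x ^ 2 + B * x + D) =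
      A * (v - u) ^ 3 / 16 := by
  simp only [monicChebyshevU₂]
  rw [integral_sign_mul_sub_mul_sub (by linarith) (by linarith) (by linarith)
    (Continuous.intervalIntegrable (by fun_prop) u v)]
  simp only [integral_quadratic]
  ring

lemma integral_abs_monicChebyshevU₂ (huv : u ≤ v) :
    ∫ x in u..v, |monicChebyshevU₂ u v x| = (v - u) ^ 3 / 16 := by
  have hexpand (x : ℝ) : monicChebyshevU₂ u v x =
      1 * x ^ 2 + -(u + v) * x + (3 * u + v) / 4 * ((u + 3 * v) / 4) := by
    rw [monicChebyshevU₂]; ring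
  calc
    ∫ x in u..v, |monicChebyshevU₂ u v x| =
        ∫ x in u..v, SignType.sign (monicChebyshevU₂ u v x) * monicChebyshevU₂ u v x := by
      simp only [sign_mul_self]
    _ = ∫ x in u..v, SignType.sign (monicChebyshevU₂ u v x) *
          (1 * x ^ 2 + -(u + v) * x + (3 * u + v) / 4 * ((u + 3 * v) / 4)) := by
      simp only [← hexpand]
    _ = (v - u) ^ 3 / 16 := by
      rw [integral_sign_monicChebyshevU₂_mul_quadratic huv, one_mul]

theorem integral_abs_const_mul_monicChebyshevU₂_le_add_affine (huv : u ≤ v) (k α β : ℝ) :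
    ∫ x in u..v, |k * monicChebyshevU₂ u v x| ≤
      ∫ x in u..v, |k * monicChebyshevU₂ u v x + (α * x + β)| := by
  have horth : ∫ x in u..v, SignType.sign (k * monicChebyshevU₂ u v x) * (α * x + β) = 0 := by
    have h := integral_sign_monicChebyshevU₂_mul_quadratic huv 0 α β
    simp only [zero_mul, zero_add, zero_div] at h
    simp only [sign_mul, SignType.coe_mul, mul_assoc, intervalIntegral.integral_const_mul, h,
      mul_zero]
  have hr : IntervalIntegrable (fun x ↦ k * monicChebyshevU₂ u v x) volume u v :=
    Continuous.intervalIntegrable (by fun_prop) u v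
  have hd : IntervalIntegrable (fun x ↦ α * x + β) volume u v :=
    Continuous.intervalIntegrable (by fun_prop) u v
  simp only [intervalIntegral.integral_of_le huv] at horth ⊢
  exact integral_abs_le_integral_abs_add_of_integral_sign_mul_eq_zero hr.1 hd.1 horth

end ChebyshevU₂

/-- For the quadratic `f(x) = (C/2)x² + bx + c` on `[u, v]`, the minimum of `∫_u^v |f - ℓ|`
over all affine functions `ℓ` equals `|C| h³ / 32` where `h = v - u`. -/
theorem quadratic_best_L1_affine_error (C b c u v : ℝ) (huv : u < v) (f : ℝ → ℝ)
    (hf : ∀ x, f x = C / 2 * x ^ 2 + b * x + c) :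
    IsLeast {e : ℝ | ∃ α β : ℝ, e = ∫ x in u..v, |f x - (α * x + β)|}
      (|C| * (v - u) ^ 3 / 32) := by
  obtain ⟨α₀, β₀, hinterp⟩ :
      ∃ α₀ β₀, ∀ x, f x = C / 2 * monicChebyshevU₂ u v x + (α₀ * x + β₀) :=
    ⟨b + C / 2 * (u + v), c - C / 2 * ((3 * u + v) / 4 * ((u + 3 * v) / 4)), fun x ↦ by
      rw [hf, monicChebyshevU₂]; ring⟩
  have hmin : ∫ x in u..v, |C / 2 * monicChebyshevU₂ u v x| = |C| * (v - u) ^ 3 / 32 := by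
    simp only [abs_mul, intervalIntegral.integral_const_mul, integral_abs_monicChebyshevU₂ huv.le,
      abs_div, abs_two]
    ring
  rw [← hmin]
  constructor
  · exact ⟨α₀, β₀, by simp only [hinterp, add_sub_cancel_right]⟩
  · rintro _ ⟨α, β, rfl⟩
    convert integral_abs_const_mul_monicChebyshevU₂_le_add_affine huv.le (C / 2) (α₀ - α)
      (β₀ - β) using 4
    rw [hinterp]
    ring
end

section
/- Let f be twice continuously differentiable on [u, v] with u < v, let h = v − u, and let ℓ be the affine function with ℓ(u + h/4) = f(u + h/4) and ℓ(u + 3h/4) = f(u + 3h/4). Then there exists η ∈ (u, v) such that (ℓ(u) − f(u)) + (ℓ(v) − f(v)) = −(3h²/16) · f''(η); that is, the sum of the endpoint displacements of the canonical-point interpolant has sign opposite to the local convexity/concavity of f. -/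
/-! An affine function has vanishing second differences, and `u, p, q, v` with `p + q = u + v` are
the nodes of the second difference with steps `p - u` and `v - p`. Hence the sum of the endpoint
displacements is minus this second difference of `f`, which two applications of the mean value
theorem turn into `(p - u) * (v - p) * f''(η)`. For the canonical points, `p - u = h / 4` and
`v - p = 3 * h / 4`. -/

open Set Topology

theorem hasDerivAt_iteratedDerivWithin {𝕜 F : Type*} [NontriviallyNormedField 𝕜]
    [NormedAddCommGroup F] [NormedSpace 𝕜 F] {f : 𝕜 → F} {S : Set 𝕜} {x : 𝕜} {N : WithTop ℕ∞}
    {n : ℕ} (hf : ContDiffOn 𝕜 N f S) (hn : n < N) (hS : UniqueDiffOn 𝕜 S) (hx : S ∈ 𝓝 x) :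
    HasDerivAt (iteratedDerivWithin n f S) (iteratedDerivWithin (n + 1) f S x) x := by
  rw [iteratedDerivWithin_succ]
  exact (hf.differentiableOn_iteratedDerivWithin hn hS x
    (mem_of_mem_nhds hx)).hasDerivWithinAt.hasDerivAt hx

theorem exists_second_difference_eq_mul {f f' f'' : ℝ → ℝ} {x s t : ℝ} (hs : 0 < s) (ht : 0 < t)
    (hfc : ContinuousOn f (Icc x (x + s + t)))
    (hf : ∀ y ∈ Ioo x (x + s + t), HasDerivAt f (f' y) y)
    (hf' : ∀ y ∈ Ioo x (x + s + t), HasDerivAt f' (f'' y) y) :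
    ∃ η ∈ Ioo x (x + s + t), f (x + s + t) - f (x + s) - f (x + t) + f x = s * t * f'' η := by
  have increment_continuousOn : ContinuousOn (fun y ↦ f (y + s) - f y) (Icc x (x + t)) := by
    refine (hfc.comp (by fun_prop) fun y hy ↦ ?_).sub (hfc.mono (Icc_subset_Icc_right ?_))
    · constructor <;> linarith [hy.1, hy.2]
    · linarith
  have increment_hasDerivAt : ∀ y ∈ Ioo x (x + t),
      HasDerivAt (fun y ↦ f (y + s) - f y) (f' (y + s) - f' y) y := fun y hy ↦
    ((hf (y + s) ⟨by linarith [hy.1], by linarith [hy.2]⟩).comp_add_const y s).sub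
      (hf y ⟨hy.1, by linarith [hy.2]⟩)
  obtain ⟨ξ, hξ, hξ_slope⟩ := exists_hasDerivAt_eq_slope _ _ (by linarith)
    increment_continuousOn increment_hasDerivAt
  have Icc_subset : Icc ξ (ξ + s) ⊆ Ioo x (x + s + t) := fun y hy ↦
    ⟨hξ.1.trans_le hy.1, by linarith [hy.2, hξ.2]⟩
  obtain ⟨η, hη, hη_slope⟩ := exists_hasDerivAt_eq_slope f' f'' (by linarith)
    (fun y hy ↦ (hf' y (Icc_subset hy)).continuousAt.continuousWithinAt)
    (fun y hy ↦ hf' y (Icc_subset (Ioo_subset_Icc_self hy)))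
  refine ⟨η, Icc_subset (Ioo_subset_Icc_self hη), ?_⟩
  rw [add_sub_cancel_left, eq_div_iff ht.ne', add_right_comm x t s] at hξ_slope
  rw [add_sub_cancel_left, eq_div_iff hs.ne'] at hη_slope
  linear_combination -hξ_slope - t * hη_slope

theorem canonical_affine_displacement_sum_general {u v p q α β : ℝ} {f f' f'' ℓ : ℝ → ℝ}
    (hfc : ContinuousOn f (Icc u v)) (hf : ∀ x ∈ Ioo u v, HasDerivAt f (f' x) x)
    (hf' : ∀ x ∈ Ioo u v, HasDerivAt f' (f'' x) x) (hℓ : ∀ x, ℓ x = α * x + β)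
    (hp : p ∈ Ioo u v) (hpq : p + q = u + v) (hℓp : ℓ p = f p) (hℓq : ℓ q = f q) :
    ∃ η ∈ Ioo u v, (ℓ u - f u) + (ℓ v - f v) = -((p - u) * (v - p)) * f'' η := by
  have hv : u + (p - u) + (v - p) = v := by ring
  have hq : u + (v - p) = q := by linarith
  obtain ⟨η, hη, second_difference⟩ := exists_second_difference_eq_mul (f := f) (f' := f')
    (f'' := f'') (sub_pos.2 hp.1) (sub_pos.2 hp.2) (by rwa [hv]) (by rwa [hv]) (by rwa [hv])
  rw [hv, hq, add_sub_cancel] at second_difference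
  have affine_sum : ℓ u + ℓ v = ℓ p + ℓ q := by
    simp only [hℓ]
    linear_combination -α * hpq
  exact ⟨η, hv ▸ hη, by linear_combination affine_sum + hℓp + hℓq - second_difference⟩

/-- For `f` twice continuously differentiable on `[u, v]` (`h = v - u`) and `ℓ` the affine
interpolant of `f` at the canonical points `u + h/4` and `u + 3h/4`, there exists
`η ∈ (u, v)` with `(ℓ(u) - f(u)) + (ℓ(v) - f(v)) = -(3h²/16) f''(η)`; that is, the sum of the
endpoint displacements has sign opposite to the local convexity/concavity of `f`. -/
theorem canonical_affine_displacement_sum (u v : ℝ) (huv : u < v) (f ℓ : ℝ → ℝ)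
    (hf : ContDiffOn ℝ 2 f (Set.Icc u v))
    (α β : ℝ) (hℓ : ∀ x, ℓ x = α * x + β)
    (h1 : ℓ (u + (v - u) / 4) = f (u + (v - u) / 4))
    (h2 : ℓ (u + 3 * (v - u) / 4) = f (u + 3 * (v - u) / 4)) :
    ∃ η ∈ Set.Ioo u v,
      (ℓ u - f u) + (ℓ v - f v) =
        -(3 * (v - u) ^ 2 / 16) * iteratedDerivWithin 2 f (Set.Icc u v) η := by
  have hasDerivAt_iterated {n : ℕ} (hn : n < (2 : WithTop ℕ∞)) (x : ℝ) (hx : x ∈ Ioo u v) :=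
    hasDerivAt_iteratedDerivWithin hf hn (uniqueDiffOn_Icc huv) (Icc_mem_nhds hx.1 hx.2)
  obtain ⟨η, hη, displacement_eq⟩ := canonical_affine_displacement_sum_general hf.continuousOn
    (by simpa only [iteratedDerivWithin_zero] using hasDerivAt_iterated (n := 0) (by norm_num))
    (hasDerivAt_iterated (n := 1) (by norm_num)) hℓ
    ⟨by linarith, by linarith⟩ (by ring) h1 h2
  exact ⟨η, hη, by rw [displacement_eq]; ring⟩
end

section
/- Let f be twice continuously differentiable on [x_{i−1}, x_{i+1}] with x_{i−1} < x_i < x_{i+1}, let h_i = x_i − x_{i−1}, h_{i+1} = x_{i+1} − x_i, and let M = sup_{x ∈ [x_{i−1}, x_{i+1}]} |f''(x)|. Let ℓ_i be the affine function interpolating f at x_{i−1} + h_i/4 and x_{i−1} + 3h_i/4, and let ℓ_{i+1} be the affine function interpolating f at x_i + h_{i+1}/4 and x_i + 3h_{i+1}/4. Then the jump discontinuity at x_i between the two segments satisfies |ℓ_i(x_i) − ℓ_{i+1}(x_i)| ≤ (3M/16) · (h_i² + h_{i+1}²). -/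
/-! By Rolle's theorem, applied twice, the error of affine interpolation at nodes `p`, `q` is
`f x - ℓ x = f'' ξ / 2 * ((x - p) * (x - q))`. At either endpoint of an interval of length `h` the
distances to the canonical points are `h / 4` and `3 * h / 4`, so each segment misses `f x₁` by at
most `3 * M / 32 * h ^ 2`, and the jump is at most the sum of the two errors. This gives half the
stated constant. -/

open Set
open scoped Topology

section Derivatives

variable {𝕜 F : Type*} [NontriviallyNormedField 𝕜] [NormedAddCommGroup F] [NormedSpace 𝕜 F]

lemma hasDerivAt_iteratedDerivWithin_of_contDiffOn {f : 𝕜 → F} {s : Set 𝕜} {x : 𝕜} {n : WithTop ℕ∞}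
    {m : ℕ} (hf : ContDiffOn 𝕜 n f s) (hmn : m < n) (hs : UniqueDiffOn 𝕜 s) (hx : s ∈ 𝓝 x) :
    HasDerivAt (iteratedDerivWithin m f s) (iteratedDerivWithin (m + 1) f s x) x := by
  rw [iteratedDerivWithin_succ]
  exact (hf.differentiableOn_iteratedDerivWithin hmn hs x (mem_of_mem_nhds hx)).hasDerivWithinAt
    |>.hasDerivAt hx

end Derivatives

section InterpolationError

variable {f f' f'' ℓ : ℝ → ℝ} {a b p q x α β M : ℝ}

lemma exists_second_deriv_eq_zero_of_lt_of_lt {c : ℝ} (hab : a < b) (hbc : b < c)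
    (hf : ContinuousOn f (Icc a c)) (hf' : ∀ x ∈ Ioo a c, HasDerivAt f (f' x) x)
    (hf'' : ∀ x ∈ Ioo a c, HasDerivAt f' (f'' x) x) (h₁ : f a = f b) (h₂ : f b = f c) :
    ∃ ξ ∈ Ioo a c, f'' ξ = 0 := by
  obtain ⟨r, hr, hr0⟩ := exists_hasDerivAt_eq_zero hab
    (hf.mono (Icc_subset_Icc_right hbc.le)) h₁ fun x hx ↦ hf' x (Ioo_subset_Ioo_right hbc.le hx)
  obtain ⟨s, hs, hs0⟩ := exists_hasDerivAt_eq_zero hbc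
    (hf.mono (Icc_subset_Icc_left hab.le)) h₂ fun x hx ↦ hf' x (Ioo_subset_Ioo_left hab.le hx)
  have hrs : Icc r s ⊆ Ioo a c := Icc_subset_Ioo hr.1 hs.2
  obtain ⟨ξ, hξ, hξ0⟩ := exists_hasDerivAt_eq_zero (hr.2.trans hs.1)
    (fun x hx ↦ (hf'' x (hrs hx)).continuousAt.continuousWithinAt) (hr0.trans hs0.symm)
    fun x hx ↦ hf'' x (hrs (Ioo_subset_Icc_self hx))
  exact ⟨ξ, hrs (Ioo_subset_Icc_self hξ), hξ0⟩

lemma exists_second_deriv_eq_zero (hf : ContinuousOn f (Icc a b))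
    (hf' : ∀ x ∈ Ioo a b, HasDerivAt f (f' x) x) (hf'' : ∀ x ∈ Ioo a b, HasDerivAt f' (f'' x) x)
    (hp : p ∈ Icc a b) (hq : q ∈ Icc a b) (hx : x ∈ Icc a b) (hpq : p ≠ q) (hxp : x ≠ p)
    (hxq : x ≠ q) (hfpq : f p = f q) (hfxp : f x = f p) :
    ∃ ξ ∈ Ioo a b, f'' ξ = 0 := by
  have of_sorted {u v w : ℝ} (hu : u ∈ Icc a b) (hw : w ∈ Icc a b) (huv : u < v) (hvw : v < w)
      (h₁ : f u = f v) (h₂ : f v = f w) : ∃ ξ ∈ Ioo a b, f'' ξ = 0 := by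
    have hsub : Ioo u w ⊆ Ioo a b := Ioo_subset_Ioo hu.1 hw.2
    obtain ⟨ξ, hξ, hξ0⟩ := exists_second_deriv_eq_zero_of_lt_of_lt huv hvw
      (hf.mono (Icc_subset_Icc hu.1 hw.2)) (fun x hx ↦ hf' x (hsub hx))
      (fun x hx ↦ hf'' x (hsub hx)) h₁ h₂
    exact ⟨ξ, hsub hξ, hξ0⟩
  wlog hlt : p < q generalizing p q
  · exact this hq hp hpq.symm hxq hxp hfpq.symm (hfxp.trans hfpq)
      (hpq.lt_or_gt.resolve_left hlt)
  rcases hxp.lt_or_gt with hxp | hpx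
  · exact of_sorted hx hq hxp hlt hfxp hfpq
  rcases hxq.lt_or_gt with hxq | hqx
  · exact of_sorted hp hq hpx hxq hfxp.symm (hfxp.trans hfpq)
  · exact of_sorted hp hx hlt hqx hfpq (hfxp.trans hfpq).symm

lemma exists_sub_affine_eq_second_deriv_mul (hf : ContinuousOn f (Icc a b))
    (hf' : ∀ x ∈ Ioo a b, HasDerivAt f (f' x) x) (hf'' : ∀ x ∈ Ioo a b, HasDerivAt f' (f'' x) x)
    (hℓ : ∀ x, ℓ x = α * x + β) (hp : p ∈ Icc a b) (hq : q ∈ Icc a b) (hpq : p ≠ q)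
    (hℓp : ℓ p = f p) (hℓq : ℓ q = f q) (hx : x ∈ Icc a b) :
    ∃ ξ ∈ Ioo a b, f x - ℓ x = f'' ξ / 2 * ((x - p) * (x - q)) := by
  by_cases hnode : x = p ∨ x = q
  · have hab : a < b :=
      (le_min hp.1 hq.1).trans_lt ((min_lt_max.2 hpq).trans_le (max_le hp.2 hq.2))
    obtain ⟨ξ, hξ⟩ := nonempty_Ioo.2 hab
    refine ⟨ξ, hξ, ?_⟩
    rcases hnode with rfl | rfl
    · simp [hℓp]
    · simp [hℓq]
  obtain ⟨hxp, hxq⟩ := not_or.1 hnode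
  have hprod : (x - p) * (x - q) ≠ 0 := mul_ne_zero (sub_ne_zero.2 hxp) (sub_ne_zero.2 hxq)
  -- The multiple of the node polynomial is chosen so that `g` also vanishes at `x`.
  let K := (f x - ℓ x) / ((x - p) * (x - q))
  let g : ℝ → ℝ := fun t ↦ f t - (α * t + β) - K * ((t - p) * (t - q))
  have hg : ContinuousOn g (Icc a b) := by fun_prop
  have hg' : ∀ t ∈ Ioo a b, HasDerivAt g (f' t - α - K * ((t - q) + (t - p))) t := fun t ht ↦ by
    have haff : HasDerivAt (fun t ↦ α * t + β) α t := by
      simpa using ((hasDerivAt_id t).const_mul α).add_const β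
    have hnodal : HasDerivAt (fun t ↦ (t - p) * (t - q)) ((t - q) + (t - p)) t := by
      simpa using ((hasDerivAt_id t).sub_const p).fun_mul ((hasDerivAt_id t).sub_const q)
    exact ((hf' t ht).sub haff).sub (hnodal.const_mul K)
  have hg'' : ∀ t ∈ Ioo a b,
      HasDerivAt (fun t ↦ f' t - α - K * ((t - q) + (t - p))) (f'' t - K * (1 + 1)) t :=
    fun t ht ↦ ((hf'' t ht).sub_const α).sub
      ((((hasDerivAt_id t).sub_const q).add ((hasDerivAt_id t).sub_const p)).const_mul K)
  have hgp : g p = 0 := by simp [g, ← hℓ, hℓp]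
  have hgq : g q = 0 := by simp [g, ← hℓ, hℓq]
  have hgx : g x = 0 := by simp [g, K, ← hℓ, div_mul_cancel₀ _ hprod]
  obtain ⟨ξ, hξ, hξ0⟩ := exists_second_deriv_eq_zero hg hg' hg'' hp hq hx hpq hxp hxq
    (hgp.trans hgq.symm) (hgx.trans hgp.symm)
  have hK : f'' ξ / 2 = K := by linarith
  exact ⟨ξ, hξ, by rw [hK, div_mul_cancel₀ _ hprod]⟩

lemma abs_sub_affine_le_of_abs_second_deriv_le (hf : ContinuousOn f (Icc a b))
    (hf' : ∀ x ∈ Ioo a b, HasDerivAt f (f' x) x) (hf'' : ∀ x ∈ Ioo a b, HasDerivAt f' (f'' x) x)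
    (hM : ∀ x ∈ Ioo a b, |f'' x| ≤ M) (hℓ : ∀ x, ℓ x = α * x + β) (hp : p ∈ Icc a b)
    (hq : q ∈ Icc a b) (hpq : p ≠ q) (hℓp : ℓ p = f p) (hℓq : ℓ q = f q) (hx : x ∈ Icc a b) :
    |f x - ℓ x| ≤ M / 2 * |(x - p) * (x - q)| := by
  obtain ⟨ξ, hξ, h⟩ := exists_sub_affine_eq_second_deriv_mul hf hf' hf'' hℓ hp hq hpq hℓp hℓq hx
  rw [h, abs_mul, abs_div, abs_two]
  gcongr
  exact hM ξ hξ

lemma abs_sub_affine_le_of_canonical_points (hab : a < b) (hf : ContinuousOn f (Icc a b))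
    (hf' : ∀ x ∈ Ioo a b, HasDerivAt f (f' x) x) (hf'' : ∀ x ∈ Ioo a b, HasDerivAt f' (f'' x) x)
    (hM : ∀ x ∈ Ioo a b, |f'' x| ≤ M) (hℓ : ∀ x, ℓ x = α * x + β)
    (h₁ : ℓ (a + (b - a) / 4) = f (a + (b - a) / 4))
    (h₂ : ℓ (a + 3 * (b - a) / 4) = f (a + 3 * (b - a) / 4)) (hx : x = a ∨ x = b) :
    |f x - ℓ x| ≤ 3 * M / 32 * (b - a) ^ 2 := by
  have hprod : (x - (a + (b - a) / 4)) * (x - (a + 3 * (b - a) / 4)) = 3 / 16 * (b - a) ^ 2 := by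
    rcases hx with rfl | rfl <;> ring
  calc |f x - ℓ x|
      ≤ M / 2 * |(x - (a + (b - a) / 4)) * (x - (a + 3 * (b - a) / 4))| :=
        abs_sub_affine_le_of_abs_second_deriv_le hf hf' hf'' hM hℓ ⟨by linarith, by linarith⟩
          ⟨by linarith, by linarith⟩ (by linarith) h₁ h₂
          (by rcases hx with rfl | rfl <;> simp [hab.le])
    _ = 3 * M / 32 * (b - a) ^ 2 := by
        rw [hprod, abs_of_nonneg (by positivity)]
        ring

end InterpolationError

theorem jump_discontinuity_bound_general {x₀ x₁ x₂ : ℝ} (h01 : x₀ < x₁) (h12 : x₁ < x₂)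
    {f f' f'' ℓ₁ ℓ₂ : ℝ → ℝ} (hf : ContinuousOn f (Icc x₀ x₂))
    (hf' : ∀ x ∈ Ioo x₀ x₂, x ≠ x₁ → HasDerivAt f (f' x) x)
    (hf'' : ∀ x ∈ Ioo x₀ x₂, x ≠ x₁ → HasDerivAt f' (f'' x) x) {M₁ M₂ : ℝ}
    (hM₁ : ∀ x ∈ Ioo x₀ x₁, |f'' x| ≤ M₁) (hM₂ : ∀ x ∈ Ioo x₁ x₂, |f'' x| ≤ M₂)
    {α₁ β₁ α₂ β₂ : ℝ} (hℓ₁ : ∀ x, ℓ₁ x = α₁ * x + β₁) (hℓ₂ : ∀ x, ℓ₂ x = α₂ * x + β₂)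
    (h11 : ℓ₁ (x₀ + (x₁ - x₀) / 4) = f (x₀ + (x₁ - x₀) / 4))
    (h12' : ℓ₁ (x₀ + 3 * (x₁ - x₀) / 4) = f (x₀ + 3 * (x₁ - x₀) / 4))
    (h21 : ℓ₂ (x₁ + (x₂ - x₁) / 4) = f (x₁ + (x₂ - x₁) / 4))
    (h22 : ℓ₂ (x₁ + 3 * (x₂ - x₁) / 4) = f (x₁ + 3 * (x₂ - x₁) / 4)) :
    |ℓ₁ x₁ - ℓ₂ x₁| ≤ 3 * M₁ / 32 * (x₁ - x₀) ^ 2 + 3 * M₂ / 32 * (x₂ - x₁) ^ 2 := by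
  have hleft : |f x₁ - ℓ₁ x₁| ≤ 3 * M₁ / 32 * (x₁ - x₀) ^ 2 :=
    abs_sub_affine_le_of_canonical_points h01 (hf.mono (Icc_subset_Icc_right h12.le))
      (fun x hx ↦ hf' x ⟨hx.1, hx.2.trans h12⟩ hx.2.ne)
      (fun x hx ↦ hf'' x ⟨hx.1, hx.2.trans h12⟩ hx.2.ne) hM₁ hℓ₁ h11 h12' (.inr rfl)
  have hright : |f x₁ - ℓ₂ x₁| ≤ 3 * M₂ / 32 * (x₂ - x₁) ^ 2 :=
    abs_sub_affine_le_of_canonical_points h12 (hf.mono (Icc_subset_Icc_left h01.le))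
      (fun x hx ↦ hf' x ⟨h01.trans hx.1, hx.2⟩ hx.1.ne')
      (fun x hx ↦ hf'' x ⟨h01.trans hx.1, hx.2⟩ hx.1.ne') hM₂ hℓ₂ h21 h22 (.inl rfl)
  calc |ℓ₁ x₁ - ℓ₂ x₁| ≤ |ℓ₁ x₁ - f x₁| + |f x₁ - ℓ₂ x₁| := abs_sub_le _ _ _
    _ = |f x₁ - ℓ₁ x₁| + |f x₁ - ℓ₂ x₁| := by rw [abs_sub_comm]
    _ ≤ _ := add_le_add hleft hright

/-- Bound on the jump discontinuity between adjacent independently optimized segments. Let `f`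
be twice continuously differentiable on `[x₀, x₂]` with `x₀ < x₁ < x₂`,
`M = sup_{[x₀,x₂]} |f''|`, and let `ℓ₁`, `ℓ₂` be the affine functions interpolating `f` at the
canonical points of `[x₀, x₁]` and of `[x₁, x₂]` respectively. Then
`|ℓ₁(x₁) - ℓ₂(x₁)| ≤ (3M/16)(h₁² + h₂²)` where `h₁ = x₁ - x₀` and `h₂ = x₂ - x₁`. -/
theorem jump_discontinuity_bound (x₀ x₁ x₂ : ℝ) (h01 : x₀ < x₁) (h12 : x₁ < x₂)
    (f ℓ₁ ℓ₂ : ℝ → ℝ)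
    (hf : ContDiffOn ℝ 2 f (Set.Icc x₀ x₂)) (M : ℝ)
    (hM : IsLUB
      ((fun x => |iteratedDerivWithin 2 f (Set.Icc x₀ x₂) x|) '' Set.Icc x₀ x₂) M)
    (α₁ β₁ α₂ β₂ : ℝ) (hℓ₁ : ∀ x, ℓ₁ x = α₁ * x + β₁) (hℓ₂ : ∀ x, ℓ₂ x = α₂ * x + β₂)
    (h11 : ℓ₁ (x₀ + (x₁ - x₀) / 4) = f (x₀ + (x₁ - x₀) / 4))
    (h12' : ℓ₁ (x₀ + 3 * (x₁ - x₀) / 4) = f (x₀ + 3 * (x₁ - x₀) / 4))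
    (h21 : ℓ₂ (x₁ + (x₂ - x₁) / 4) = f (x₁ + (x₂ - x₁) / 4))
    (h22 : ℓ₂ (x₁ + 3 * (x₂ - x₁) / 4) = f (x₁ + 3 * (x₂ - x₁) / 4)) :
    |ℓ₁ x₁ - ℓ₂ x₁| ≤ 3 * M / 16 * ((x₁ - x₀) ^ 2 + (x₂ - x₁) ^ 2) := by
  have hbound : ∀ x ∈ Icc x₀ x₂, |iteratedDerivWithin 2 f (Icc x₀ x₂) x| ≤ M :=
    fun x hx ↦ hM.1 (mem_image_of_mem _ hx)
  have hM₀ : 0 ≤ M := (abs_nonneg _).trans (hbound x₁ ⟨h01.le, h12.le⟩)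
  have hderiv {m : ℕ} (hm : m < (2 : WithTop ℕ∞)) (x : ℝ) (hx : x ∈ Ioo x₀ x₂) :
      HasDerivAt (iteratedDerivWithin m f (Icc x₀ x₂))
        (iteratedDerivWithin (m + 1) f (Icc x₀ x₂) x) x :=
    hasDerivAt_iteratedDerivWithin_of_contDiffOn hf hm (uniqueDiffOn_Icc (h01.trans h12))
      (Icc_mem_nhds hx.1 hx.2)
  calc |ℓ₁ x₁ - ℓ₂ x₁| ≤ 3 * M / 32 * (x₁ - x₀) ^ 2 + 3 * M / 32 * (x₂ - x₁) ^ 2 :=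
        jump_discontinuity_bound_general h01 h12 hf.continuousOn
          (fun x hx _ ↦ iteratedDerivWithin_zero (f := f) ▸ hderiv (m := 0) (by norm_num) x hx)
          (fun x hx _ ↦ hderiv (m := 1) (by norm_num) x hx)
          (fun x hx ↦ hbound x ⟨hx.1.le, (hx.2.trans h12).le⟩)
          (fun x hx ↦ hbound x ⟨(h01.trans hx.1).le, hx.2.le⟩) hℓ₁ hℓ₂ h11 h12' h21 h22
    _ = 3 * M / 32 * ((x₁ - x₀) ^ 2 + (x₂ - x₁) ^ 2) := by ring
    _ ≤ 3 * M / 16 * ((x₁ - x₀) ^ 2 + (x₂ - x₁) ^ 2) := by gcongr; norm_num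
end

section
/- Let f be twice continuously differentiable on [a, b], let a = x₀ < x₁ < … < x_N = b be a partition T with subintervals I_i = [x_{i−1}, x_i] of lengths h_i = x_i − x_{i−1}, and let π_T f be the polygonal interpolant of f on T. If the partition satisfies the error-equalization condition (sup_{x ∈ I_i} |f''(x)|) · h_i³ ≤ C for every i = 1, …, N and some constant C > 0, then ∫_a^b |f(x) − π_T f(x)| dx ≤ C · N / 12. -/
/-!
On one subinterval `[p, q]` of length `h`, a bound `|f''| ≤ M` says that both `f` and `-f` are
strongly convex with the (negative) modulus `-M`. The defining inequality of strong convexity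
compares `f` with its chord, and gives `|f t - π f t| ≤ M / 2 * (t - p) * (q - t)`. Integrating, the
subinterval contributes at most `M * h ^ 3 / 12` to the `L¹` error, which error equalization bounds
by `C / 12`.
-/

open Set intervalIntegral

section IteratedDerivWithin

variable {𝕜 F : Type*} [NontriviallyNormedField 𝕜] [NormedAddCommGroup F] [NormedSpace 𝕜 F]
  {n : WithTop ℕ∞} {m : ℕ} {f : 𝕜 → F} {s : Set 𝕜} {x : 𝕜}

lemma hasDerivAt_iteratedDerivWithin_s17 (hf : ContDiffOn 𝕜 n f s) (hmn : m < n)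
    (hs : UniqueDiffOn 𝕜 s) (hx : s ∈ nhds x) :
    HasDerivAt (iteratedDerivWithin m f s) (iteratedDerivWithin (m + 1) f s x) x := by
  rw [iteratedDerivWithin_succ]
  exact (hf.differentiableOn_iteratedDerivWithin hmn hs x (mem_of_mem_nhds hx)).hasDerivWithinAt
    |>.hasDerivAt hx

lemma norm_iteratedDerivWithin_le_sSup {K : Set 𝕜} (hf : ContDiffOn 𝕜 n f s) (hmn : m ≤ n)
    (hs : UniqueDiffOn 𝕜 s) (hK : IsCompact K) (hKs : K ⊆ s) (hx : x ∈ K) :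
    ‖iteratedDerivWithin m f s x‖ ≤ sSup ((fun y ↦ ‖iteratedDerivWithin m f s y‖) '' K) :=
  le_csSup (hK.bddAbove_image ((hf.continuousOn_iteratedDerivWithin hmn hs).mono hKs).norm)
    (mem_image_of_mem _ hx)

end IteratedDerivWithin

lemma strongConvexOn_of_le_hasDerivWithinAt2 {D : Set ℝ} (hD : Convex ℝ D) {f f' f'' : ℝ → ℝ}
    {m : ℝ} (hf : ContinuousOn f D)
    (hf' : ∀ x ∈ interior D, HasDerivWithinAt f (f' x) (interior D) x)
    (hf'' : ∀ x ∈ interior D, HasDerivWithinAt f' (f'' x) (interior D) x)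
    (hm : ∀ x ∈ interior D, m ≤ f'' x) : StrongConvexOn D m f := by
  simp only [strongConvexOn_iff_convex, Real.norm_eq_abs, sq_abs]
  refine convexOn_of_hasDerivWithinAt2_nonneg hD (by fun_prop)
    (f' := fun x ↦ f' x - m * x) (f'' := fun x ↦ f'' x - m) (fun x hx ↦ ?_) (fun x hx ↦ ?_)
    fun x hx ↦ sub_nonneg.2 (hm x hx)
  · have hsq : HasDerivAt (fun x : ℝ ↦ m / 2 * x ^ 2) (m * x) x :=
      ((hasDerivAt_pow 2 x).const_mul (m / 2)).congr_deriv (by norm_num; ring)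
    exact (hf' x hx).sub hsq.hasDerivWithinAt
  · exact (hf'' x hx).sub (hasDerivAt_const_mul m).hasDerivWithinAt

lemma integral_sub_mul_sub (p q : ℝ) : ∫ t in p..q, (t - p) * (q - t) = (q - p) ^ 3 / 6 := by
  calc ∫ t in p..q, (t - p) * (q - t)
      = ∫ t in p..q, (fun u ↦ (q - p) * u - u ^ 2) (t - p) := by congr with t; ring
    _ = ∫ u in 0..q - p, ((q - p) * u - u ^ 2) := by
      rw [integral_comp_sub_right (fun u ↦ (q - p) * u - u ^ 2), sub_self]
    _ = (q - p) ^ 3 / 6 := by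
      rw [integral_sub (Continuous.intervalIntegrable (by fun_prop) _ _)
        (Continuous.intervalIntegrable (by fun_prop) _ _), integral_const_mul, integral_id,
        integral_pow]
      norm_num
      ring

lemma sum_integral_fin_adjacent_intervals {E : Type*} [NormedAddCommGroup E] [NormedSpace ℝ E]
    {μ : MeasureTheory.Measure ℝ} {f : ℝ → E} {N : ℕ} (x : Fin (N + 1) → ℝ)
    (hf : ∀ i : Fin N, IntervalIntegrable f μ (x i.castSucc) (x i.succ)) :
    ∑ i : Fin N, ∫ t in x i.castSucc..x i.succ, f t ∂μ = ∫ t in x 0..x (Fin.last N), f t ∂μ := by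
  let y : ℕ → ℝ := fun k ↦ x (Fin.ofNat (N + 1) k)
  have y_val (j : Fin (N + 1)) : y j = x j := congrArg x (Fin.ext (Nat.mod_eq_of_lt j.isLt))
  have y_castSucc (i : Fin N) : y i = x i.castSucc := y_val i.castSucc
  have y_succ (i : Fin N) : y (i + 1) = x i.succ := y_val i.succ
  have y_zero : y 0 = x 0 := y_val 0
  have y_last : y N = x (Fin.last N) := y_val (Fin.last N)
  have hy (k : ℕ) (hk : k < N) : IntervalIntegrable f μ (y k) (y (k + 1)) := by
    simpa only [← y_castSucc, ← y_succ] using hf ⟨k, hk⟩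
  simpa only [Finset.sum_range, y_castSucc, y_succ, y_zero, y_last] using
    sum_integral_adjacent_intervals hy

section SecantLine

/-- The affine interpolant of `f` at the nodes `p` and `q`, that is, the restriction of the
polygonal interpolant to a subinterval `[p, q]` of the partition, extended to all of `ℝ`. For
`p = q` the division by zero makes it the constant `f p`. -/
noncomputable def secantLine (f : ℝ → ℝ) (p q t : ℝ) : ℝ :=
  f p + (f q - f p) * (t - p) / (q - p)

variable (f : ℝ → ℝ) {p q t : ℝ}

@[fun_prop]
lemma continuous_secantLine (p q : ℝ) : Continuous (secantLine f p q) := by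
  unfold secantLine
  fun_prop

lemma secantLine_neg (p q t : ℝ) : secantLine (-f) p q t = -secantLine f p q t := by
  simp only [secantLine, Pi.neg_apply]
  ring

lemma secantLine_eq_convexCombination (hpq : p ≠ q) (t : ℝ) :
    secantLine f p q t = (q - t) / (q - p) * f p + (t - p) / (q - p) * f q := by
  have : q - p ≠ 0 := sub_ne_zero.2 hpq.symm
  unfold secantLine
  field_simp
  ring

variable {f} in
lemma le_secantLine_sub_of_strongConvexOn {s : Set ℝ} {m : ℝ} (hf : StrongConvexOn s m f)
    (hp : p ∈ s) (hq : q ∈ s) (hpq : p < q) (ht : t ∈ Icc p q) :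
    f t ≤ secantLine f p q t - m / 2 * ((t - p) * (q - t)) := by
  have hh : 0 < q - p := sub_pos.2 hpq
  have chord := hf.2 hp hq (div_nonneg (sub_nonneg.2 ht.2) hh.le)
    (div_nonneg (sub_nonneg.2 ht.1) hh.le) (by field_simp; ring)
  have combination : (q - t) / (q - p) * p + (t - p) / (q - p) * q = t := by field_simp; ring
  have modulus : (q - t) / (q - p) * ((t - p) / (q - p)) * (m / 2 * |p - q| ^ 2) =
      m / 2 * ((t - p) * (q - t)) := by
    rw [sq_abs]
    field_simp
    ring
  simpa only [smul_eq_mul, Real.norm_eq_abs, combination, modulus,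
    ← secantLine_eq_convexCombination f hpq.ne] using chord

end SecantLine

section InterpolationError

variable {f f' f'' : ℝ → ℝ} {p q M : ℝ}

lemma abs_sub_secantLine_le {t : ℝ} (hpq : p < q) (hf : ContinuousOn f (Icc p q))
    (hf' : ∀ s ∈ Ioo p q, HasDerivAt f (f' s) s) (hf'' : ∀ s ∈ Ioo p q, HasDerivAt f' (f'' s) s)
    (hM : ∀ s ∈ Ioo p q, |f'' s| ≤ M) (ht : t ∈ Icc p q) :
    |f t - secantLine f p q t| ≤ M / 2 * ((t - p) * (q - t)) := by
  have hp := left_mem_Icc.2 hpq.le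
  have hq := right_mem_Icc.2 hpq.le
  have convex_f : StrongConvexOn (Icc p q) (-M) f := by
    refine strongConvexOn_of_le_hasDerivWithinAt2 (convex_Icc p q) hf (f' := f') (f'' := f'')
      ?_ ?_ ?_ <;> rw [interior_Icc] <;> intro s hs
    exacts [(hf' s hs).hasDerivWithinAt, (hf'' s hs).hasDerivWithinAt, (abs_le.1 (hM s hs)).1]
  have convex_neg_f : StrongConvexOn (Icc p q) (-M) (-f) := by
    refine strongConvexOn_of_le_hasDerivWithinAt2 (convex_Icc p q) hf.neg (f' := -f')
      (f'' := -f'') ?_ ?_ ?_ <;> rw [interior_Icc] <;> intro s hs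
    exacts [(hf' s hs).neg.hasDerivWithinAt, (hf'' s hs).neg.hasDerivWithinAt,
      neg_le_neg (abs_le.1 (hM s hs)).2]
  have upper := le_secantLine_sub_of_strongConvexOn convex_f hp hq hpq ht
  have lower := le_secantLine_sub_of_strongConvexOn convex_neg_f hp hq hpq ht
  rw [secantLine_neg, Pi.neg_apply] at lower
  exact abs_le.2 ⟨by linarith, by linarith⟩

lemma integral_abs_sub_secantLine_le (hpq : p < q) (hf : ContinuousOn f (Icc p q))
    (hf' : ∀ s ∈ Ioo p q, HasDerivAt f (f' s) s) (hf'' : ∀ s ∈ Ioo p q, HasDerivAt f' (f'' s) s)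
    (hM : ∀ s ∈ Ioo p q, |f'' s| ≤ M) :
    ∫ t in p..q, |f t - secantLine f p q t| ≤ M * (q - p) ^ 3 / 12 := by
  have integrable_error :
      IntervalIntegrable (fun t ↦ |f t - secantLine f p q t|) MeasureTheory.volume p q :=
    ContinuousOn.intervalIntegrable_of_Icc hpq.le (by fun_prop)
  calc ∫ t in p..q, |f t - secantLine f p q t|
      ≤ ∫ t in p..q, M / 2 * ((t - p) * (q - t)) :=
        integral_mono_on hpq.le integrable_error (Continuous.intervalIntegrable (by fun_prop) _ _)
          fun t ht ↦ abs_sub_secantLine_le hpq hf hf' hf'' hM ht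
    _ = M * (q - p) ^ 3 / 12 := by rw [integral_const_mul, integral_sub_mul_sub]; ring

end InterpolationError

/-- `g` is the polygonal interpolant `π_T f` of `f` on the partition `T` with knots `x`. Only the
values of `g` between the extreme knots are prescribed. -/
def IsPolygonalInterpolant {N : ℕ} (x : Fin (N + 1) → ℝ) (f g : ℝ → ℝ) : Prop :=
  ∀ i : Fin N, EqOn g (secantLine f (x i.castSucc) (x i.succ)) (Icc (x i.castSucc) (x i.succ))

theorem integral_abs_sub_polygonalInterpolant_le {N : ℕ} {x : Fin (N + 1) → ℝ}
    (hx : StrictMono x) {f f' f'' g : ℝ → ℝ} (hg : IsPolygonalInterpolant x f g)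
    (hf : ∀ i : Fin N, ContinuousOn f (Icc (x i.castSucc) (x i.succ)))
    (hf' : ∀ i : Fin N, ∀ t ∈ Ioo (x i.castSucc) (x i.succ), HasDerivAt f (f' t) t)
    (hf'' : ∀ i : Fin N, ∀ t ∈ Ioo (x i.castSucc) (x i.succ), HasDerivAt f' (f'' t) t)
    {M : Fin N → ℝ} (hM : ∀ i : Fin N, ∀ t ∈ Ioo (x i.castSucc) (x i.succ), |f'' t| ≤ M i) :
    ∫ t in x 0..x (Fin.last N), |f t - g t| ≤
      ∑ i : Fin N, M i * (x i.succ - x i.castSucc) ^ 3 / 12 := by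
  have hlt (i : Fin N) : x i.castSucc < x i.succ := hx Fin.castSucc_lt_succ
  have integrable_error (i : Fin N) :
      IntervalIntegrable (fun t ↦ |f t - g t|) MeasureTheory.volume (x i.castSucc) (x i.succ) :=
    ((hf i).sub ((continuous_secantLine f _ _).continuousOn.congr (hg i))).abs
      |>.intervalIntegrable_of_Icc (hlt i).le
  rw [← sum_integral_fin_adjacent_intervals x integrable_error]
  refine Finset.sum_le_sum fun i _ ↦ ?_
  calc ∫ t in x i.castSucc..x i.succ, |f t - g t|
      = ∫ t in x i.castSucc..x i.succ, |f t - secantLine f (x i.castSucc) (x i.succ) t| :=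
        integral_congr fun t ht ↦ by
          rw [uIcc_of_le (hlt i).le] at ht
          simp only [hg i ht]
    _ ≤ M i * (x i.succ - x i.castSucc) ^ 3 / 12 :=
        integral_abs_sub_secantLine_le (hlt i) (hf i) (hf' i) (hf'' i) (hM i)

theorem polygonal_interpolant_error_equalization_general {N : ℕ} {x : Fin (N + 1) → ℝ}
    (hx : StrictMono x) {f f' f'' g : ℝ → ℝ} (hg : IsPolygonalInterpolant x f g)
    (hf : ∀ i : Fin N, ContinuousOn f (Icc (x i.castSucc) (x i.succ)))
    (hf' : ∀ i : Fin N, ∀ t ∈ Ioo (x i.castSucc) (x i.succ), HasDerivAt f (f' t) t)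
    (hf'' : ∀ i : Fin N, ∀ t ∈ Ioo (x i.castSucc) (x i.succ), HasDerivAt f' (f'' t) t)
    {M : Fin N → ℝ} (hM : ∀ i : Fin N, ∀ t ∈ Ioo (x i.castSucc) (x i.succ), |f'' t| ≤ M i)
    {C : ℝ} (hC : ∀ i : Fin N, M i * (x i.succ - x i.castSucc) ^ 3 ≤ C) :
    ∫ t in x 0..x (Fin.last N), |f t - g t| ≤ C * N / 12 :=
  calc ∫ t in x 0..x (Fin.last N), |f t - g t|
      ≤ ∑ i : Fin N, M i * (x i.succ - x i.castSucc) ^ 3 / 12 :=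
        integral_abs_sub_polygonalInterpolant_le hx hg hf hf' hf'' hM
    _ ≤ ∑ _i : Fin N, C / 12 := by gcongr with i; exact hC i
    _ = C * N / 12 := by simp only [Finset.sum_const, Finset.card_univ, Fintype.card_fin]; ring

/-- **Error equalization bound.** Let `f` be twice continuously differentiable on `[a, b]`,
`T : a = x₀ < x₁ < … < x_N = b` a partition with polygonal interpolant `g = π_T f`. If the
partition satisfies the error-equalization condition `(sup_{Iᵢ} |f''|) hᵢ³ ≤ C` for every `i`
and some constant `C > 0`, then `∫_a^b |f - g| ≤ C N / 12`. -/
theorem polygonal_interpolant_error_equalization (a b : ℝ) (N : ℕ) (hN : 0 < N)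
    (f g : ℝ → ℝ)
    (hf : ContDiffOn ℝ 2 f (Set.Icc a b))
    (x : Fin (N + 1) → ℝ) (hmono : StrictMono x)
    (hx0 : x 0 = a) (hxN : x (Fin.last N) = b)
    (hg : ∀ i : Fin N, ∀ t ∈ Set.Icc (x i.castSucc) (x i.succ),
      g t = f (x i.castSucc) +
        (f (x i.succ) - f (x i.castSucc)) * (t - x i.castSucc) / (x i.succ - x i.castSucc))
    (C : ℝ) (hC : 0 < C)
    (heq : ∀ i : Fin N,
      sSup ((fun t => |iteratedDerivWithin 2 f (Set.Icc a b) t|) ''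
          Set.Icc (x i.castSucc) (x i.succ)) *
        (x i.succ - x i.castSucc) ^ 3 ≤ C) :
    (∫ t in a..b, |f t - g t|) ≤ C * N / 12 := by
  subst hx0 hxN
  have hU : UniqueDiffOn ℝ (Icc (x 0) (x (Fin.last N))) :=
    uniqueDiffOn_Icc (hmono (Fin.lt_def.2 hN))
  have hsub (i : Fin N) : Icc (x i.castSucc) (x i.succ) ⊆ Icc (x 0) (x (Fin.last N)) :=
    Icc_subset_Icc (hmono.monotone (Fin.zero_le _)) (hmono.monotone (Fin.le_last _))
  have hderiv (m : ℕ) (hm : m < 2) (i : Fin N) (t : ℝ) (ht : t ∈ Ioo (x i.castSucc) (x i.succ)) :=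
    hasDerivAt_iteratedDerivWithin_s17 (m := m) hf (mod_cast hm) hU
      (Filter.mem_of_superset (Icc_mem_nhds ht.1 ht.2) (hsub i))
  exact polygonal_interpolant_error_equalization_general hmono hg
    (fun i ↦ hf.continuousOn.mono (hsub i))
    (by simpa only [iteratedDerivWithin_zero] using hderiv 0 two_pos) (hderiv 1 one_lt_two)
    (fun i _t ht ↦ norm_iteratedDerivWithin_le_sSup hf le_rfl hU isCompact_Icc (hsub i)
      (Ioo_subset_Icc_self ht)) heq
end

section
/- Let f be continuous and strictly convex on [u, v] with u < v, and let h = v − u. Then the affine function ℓ* determined by ℓ*(u + h/4) = f(u + h/4) and ℓ*(u + 3h/4) = f(u + 3h/4) is the unique minimizer of ∫_u^v |f(x) − ℓ(x)| dx over all affine functions ℓ. -/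
/-!
Let `a`, `b` be the canonical points and let `σ` be `-1` on `(a, b]` and `1` elsewhere. By the
choice of `a` and `b`, `σ` is orthogonal to the affine functions, so `∫ σ (f - ℓ)` does not depend
on the affine function `ℓ`, and it is a lower bound for `∫ |f - ℓ|`. Convexity makes `f - ℓ*`
change sign exactly like `σ`, so `ℓ*` attains the bound. An affine `ℓ` attaining it has
`σ (f - ℓ) = |f - ℓ|` almost everywhere; hence `f - ℓ` changes sign, and by continuity vanishes, at
`a` and `b`, which forces `ℓ = ℓ*`.
-/

open MeasureTheory Set

theorem mul_le_abs_of_abs_le_one {R : Type*} [CommRing R] [LinearOrder R]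
    [IsStrictOrderedRing R] {s t : R} (hs : |s| ≤ 1) : s * t ≤ |t| :=
  calc s * t ≤ |s| * |t| := abs_mul s t ▸ le_abs_self _
    _ ≤ |t| := mul_le_of_le_one_left (abs_nonneg t) hs

section Duality

variable {X : Type*} [MeasurableSpace X] {μ : Measure X} {σ g : X → ℝ}

theorem integral_mul_le_integral_abs (hσ : AEStronglyMeasurable σ μ)
    (hσ_le : ∀ᵐ x ∂μ, |σ x| ≤ 1) (hg : Integrable g μ) :
    ∫ x, σ x * g x ∂μ ≤ ∫ x, |g x| ∂μ :=
  integral_mono_ae (hg.bdd_mul hσ hσ_le) hg.abs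
    (hσ_le.mono fun _ ↦ mul_le_abs_of_abs_le_one)

theorem integral_mul_eq_integral_abs_iff (hσ : AEStronglyMeasurable σ μ)
    (hσ_le : ∀ᵐ x ∂μ, |σ x| ≤ 1) (hg : Integrable g μ) :
    ∫ x, σ x * g x ∂μ = ∫ x, |g x| ∂μ ↔ ∀ᵐ x ∂μ, σ x * g x = |g x| :=
  integral_eq_iff_of_ae_le (hg.bdd_mul hσ hσ_le) hg.abs
    (hσ_le.mono fun _ ↦ mul_le_abs_of_abs_le_one)

end Duality

theorem eq_zero_of_ae_nonneg_of_ae_nonpos {X : Type*} [LinearOrder X] [DenselyOrdered X]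
    [TopologicalSpace X] [OrderTopology X] [MeasurableSpace X] [OpensMeasurableSpace X]
    {μ : Measure X} [NullSingletonClass μ] [μ.IsOpenPosMeasure] {g : X → ℝ} {p c q : X}
    (hpc : p < c) (hcq : c < q) (hg : ContinuousOn g (Ioo p q))
    (hleft : ∀ᵐ x ∂μ, x ∈ Ioo p c → 0 ≤ g x) (hright : ∀ᵐ x ∂μ, x ∈ Ioo c q → g x ≤ 0) :
    g c = 0 := by
  have hnonneg : |g c| = g c := by
    have hg_left : ContinuousOn g (Ioc p c) := hg.mono (Ioc_subset_Ioo_right hcq)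
    refine Measure.eqOn_Ioc_of_ae_eq (μ := μ) ?_ hg_left.abs hg_left (right_mem_Ioc.2 hpc)
    rw [← Measure.restrict_congr_set Ioo_ae_eq_Ioc, Filter.EventuallyEq,
      ae_restrict_iff' measurableSet_Ioo]
    exact hleft.mono fun x hx hmem ↦ abs_of_nonneg (hx hmem)
  have hnonpos : |g c| = -g c := by
    have hg_right : ContinuousOn g (Ico c q) := hg.mono (Ico_subset_Ioo_left hpc)
    refine Measure.eqOn_Ico_of_ae_eq (μ := μ) ?_ hg_right.abs hg_right.neg (left_mem_Ico.2 hcq)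
    rw [← Measure.restrict_congr_set Ioo_ae_eq_Ico, Filter.EventuallyEq,
      ae_restrict_iff' measurableSet_Ioo]
    exact hright.mono fun x hx hmem ↦ abs_of_nonpos (hx hmem)
  linarith

theorem affine_eq_of_eq_of_eq {K : Type*} [Field K] {a b α β γ δ : K} (hab : a ≠ b)
    (ha : γ * a + δ = α * a + β) (hb : γ * b + δ = α * b + β) (x : K) :
    γ * x + δ = α * x + β := by
  have hslope : γ = α := mul_right_cancel₀ (sub_ne_zero.2 hab) (by linear_combination ha - hb)
  linear_combination ha + (x - a) * hslope

theorem integral_affine (p q γ δ : ℝ) :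
    ∫ x in p..q, (γ * x + δ) = (q - p) * (γ * ((p + q) / 2) + δ) := by
  rw [intervalIntegral.integral_add (Continuous.intervalIntegrable (by fun_prop) _ _)
    intervalIntegrable_const, intervalIntegral.integral_const_mul, integral_id,
    intervalIntegral.integral_const, smul_eq_mul]
  ring

theorem convexOn_sub_affine {s : Set ℝ} {f : ℝ → ℝ} (hf : ConvexOn ℝ s f) (γ δ : ℝ) :
    ConvexOn ℝ s (fun x ↦ f x - (γ * x + δ)) :=
  hf.sub (((LinearMap.mul ℝ ℝ γ).concaveOn hf.1).add_const δ)

theorem integrableOn_Ioc_of_convexOn_Icc {u v : ℝ} {f : ℝ → ℝ} (hf : ConvexOn ℝ (Icc u v) f) :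
    IntegrableOn f (Ioc u v) := by
  rw [← integrableOn_Icc_iff_integrableOn_Ioc, integrableOn_Icc_iff_integrableOn_Ioo]
  have hcont : ContinuousOn f (Ioo u v) := interior_Icc (a := u) ▸ hf.continuousOn_interior
  have hupper : ∀ x ∈ Icc u v, f x ≤ max (f u) (f v) := fun x hx ↦
    have huv : u ≤ v := hx.1.trans hx.2
    hf.le_max_of_mem_Icc (left_mem_Icc.2 huv) (right_mem_Icc.2 huv) hx
  -- The reflection `u + v - x` of `x` in the midpoint turns the upper bound into a lower bound.
  have hlower : ∀ x ∈ Icc u v, 2 * f ((u + v) / 2) - max (f u) (f v) ≤ f x := by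
    intro x hx
    have hreflect : u + v - x ∈ Icc u v := ⟨by linarith [hx.2], by linarith [hx.1]⟩
    have hmid := hf.2 hx hreflect (by norm_num : (0 : ℝ) ≤ 1 / 2) (by norm_num : (0 : ℝ) ≤ 1 / 2)
      (by norm_num)
    simp only [smul_eq_mul] at hmid
    rw [show 1 / 2 * x + 1 / 2 * (u + v - x) = (u + v) / 2 by ring] at hmid
    linarith [hupper _ hreflect]
  refine integrable_of_le_of_le (hcont.aestronglyMeasurable measurableSet_Ioo)
    (ae_restrict_of_forall_mem measurableSet_Ioo fun x hx ↦ hlower x (Ioo_subset_Icc_self hx))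
    (ae_restrict_of_forall_mem measurableSet_Ioo fun x hx ↦ hupper x (Ioo_subset_Icc_self hx))
    (integrable_const _) (integrable_const _)

/-- The sign function that is `-1` on the middle interval `(a, b]` and `1` outside it. For the
canonical points `a`, `b` it is the extremal functional of linear `L¹` approximation. -/
noncomputable def middleSign (a b x : ℝ) : ℝ := if x ∈ Ioc a b then -1 else 1

section MiddleSign

variable {u v a b : ℝ} {f g : ℝ → ℝ}

theorem middleSign_of_mem {x : ℝ} (hx : x ∈ Ioc a b) : middleSign a b x = -1 := if_pos hx

theorem middleSign_of_notMem {x : ℝ} (hx : x ∉ Ioc a b) : middleSign a b x = 1 := if_neg hx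

theorem measurable_middleSign (a b : ℝ) : Measurable (middleSign a b) :=
  Measurable.ite measurableSet_Ioc measurable_const measurable_const

theorem abs_middleSign (a b x : ℝ) : |middleSign a b x| = 1 := by
  unfold middleSign
  split_ifs <;> simp

theorem integrableOn_middleSign_mul {s : Set ℝ} (hg : IntegrableOn g s) :
    IntegrableOn (fun x ↦ middleSign a b x * g x) s :=
  hg.bdd_mul (measurable_middleSign a b).aestronglyMeasurable
    (ae_of_all _ fun x ↦ (abs_middleSign a b x).le)

theorem setIntegral_middleSign_mul (hua : u ≤ a) (hbv : b ≤ v) (hg : IntegrableOn g (Ioc u v)) :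
    ∫ x in Ioc u v, middleSign a b x * g x = (∫ x in Ioc u v, g x) - 2 * ∫ x in Ioc a b, g x := by
  have hsign (x : ℝ) : middleSign a b x * g x = g x - 2 * (Ioc a b).indicator g x := by
    by_cases hx : x ∈ Ioc a b
    · rw [middleSign_of_mem hx, indicator_of_mem hx]
      ring
    · rw [middleSign_of_notMem hx, indicator_of_notMem hx]
      ring
  simp only [hsign]
  rw [integral_sub hg ((hg.indicator measurableSet_Ioc).const_mul 2), integral_const_mul,
    setIntegral_indicator measurableSet_Ioc, inter_eq_right.2 (Ioc_subset_Ioc hua hbv)]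

theorem setIntegral_middleSign_mul_affine (hab : a ≤ b) (hsum : a + b = u + v)
    (hdiff : 2 * (b - a) = v - u) (γ δ : ℝ) :
    ∫ x in Ioc u v, middleSign a b x * (γ * x + δ) = 0 := by
  rw [setIntegral_middleSign_mul (by linarith) (by linarith)
      (Continuous.integrableOn_Ioc (by fun_prop)),
    ← intervalIntegral.integral_of_le (by linarith), ← intervalIntegral.integral_of_le hab,
    integral_affine, integral_affine, hsum, ← hdiff]
  ring

theorem setIntegral_middleSign_mul_sub_affine (hab : a ≤ b) (hsum : a + b = u + v)
    (hdiff : 2 * (b - a) = v - u) (hf : IntegrableOn f (Ioc u v)) (γ δ : ℝ) :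
    ∫ x in Ioc u v, middleSign a b x * (f x - (γ * x + δ)) =
      ∫ x in Ioc u v, middleSign a b x * f x := by
  simp only [mul_sub]
  rw [integral_sub (integrableOn_middleSign_mul hf)
      (integrableOn_middleSign_mul (Continuous.integrableOn_Ioc (by fun_prop))),
    setIntegral_middleSign_mul_affine hab hsum hdiff, sub_zero]

theorem middleSign_mul_eq_abs_of_convexOn {s : Set ℝ} (hg : ConvexOn ℝ s g) (ha : a ∈ s)
    (hb : b ∈ s) (hab : a < b) (hga : g a = 0) (hgb : g b = 0) {x : ℝ} (hx : x ∈ s) :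
    middleSign a b x * g x = |g x| := by
  by_cases hmem : x ∈ Ioc a b
  · have hnonpos : g x ≤ 0 := by
      simpa only [hga, hgb, max_self] using hg.le_max_of_mem_Icc ha hb (Ioc_subset_Icc_self hmem)
    rw [middleSign_of_mem hmem, abs_of_nonpos hnonpos, neg_one_mul]
  have hnonneg : 0 ≤ g x := by
    rcases le_or_gt x a with hxa | hax
    · rw [← hga]
      exact hg.le_left_of_right_le'' hx hb hxa hab (hgb.trans hga.symm).le
    · have hbx : b < x := not_le.1 fun hxb ↦ hmem ⟨hax, hxb⟩
      rw [← hgb]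
      exact hg.le_right_of_left_le'' ha hx hab hbx.le (hga.trans hgb.symm).le
  rw [middleSign_of_notMem hmem, abs_of_nonneg hnonneg, one_mul]

theorem eq_zero_of_ae_middleSign_mul_eq_abs (hua : u < a) (hab : a < b) (hbv : b < v)
    (hg : ContinuousOn g (Ioo u v))
    (hsign : ∀ᵐ x ∂volume.restrict (Ioc u v), middleSign a b x * g x = |g x|) :
    g a = 0 ∧ g b = 0 := by
  rw [ae_restrict_iff' measurableSet_Ioc] at hsign
  have hleft : ∀ᵐ x, x ∈ Ioo u a → 0 ≤ g x := by
    filter_upwards [hsign] with x hx hmem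
    have h := hx ⟨hmem.1, by linarith [hmem.2]⟩
    rw [middleSign_of_notMem fun h' ↦ hmem.2.not_gt h'.1, one_mul] at h
    exact abs_eq_self.1 h.symm
  have hmiddle : ∀ᵐ x, x ∈ Ioo a b → g x ≤ 0 := by
    filter_upwards [hsign] with x hx hmem
    have h := hx ⟨by linarith [hmem.1], by linarith [hmem.2]⟩
    rw [middleSign_of_mem (Ioo_subset_Ioc_self hmem), neg_one_mul] at h
    exact abs_eq_neg_self.1 h.symm
  have hright : ∀ᵐ x, x ∈ Ioo b v → 0 ≤ g x := by
    filter_upwards [hsign] with x hx hmem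
    have h := hx ⟨by linarith [hmem.1], hmem.2.le⟩
    rw [middleSign_of_notMem fun h' ↦ h'.2.not_gt hmem.1, one_mul] at h
    exact abs_eq_self.1 h.symm
  refine ⟨eq_zero_of_ae_nonneg_of_ae_nonpos hua hab
    (hg.mono (Ioo_subset_Ioo_right hbv.le)) hleft hmiddle, ?_⟩
  have hneg_middle : ∀ᵐ x, x ∈ Ioo a b → 0 ≤ -g x := by simpa only [neg_nonneg] using hmiddle
  have hneg_right : ∀ᵐ x, x ∈ Ioo b v → -g x ≤ 0 := by simpa only [neg_nonpos] using hright
  exact neg_eq_zero.1 <| eq_zero_of_ae_nonneg_of_ae_nonpos (g := fun x ↦ -g x) hab hbv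
    (hg.mono (Ioo_subset_Ioo_left hua.le)).neg hneg_middle hneg_right

theorem setIntegral_middleSign_mul_le_integral_abs_sub_affine (hab : a ≤ b) (hsum : a + b = u + v)
    (hdiff : 2 * (b - a) = v - u) (hf : IntegrableOn f (Ioc u v)) (γ δ : ℝ) :
    ∫ x in Ioc u v, middleSign a b x * f x ≤ ∫ x in Ioc u v, |f x - (γ * x + δ)| := by
  rw [← setIntegral_middleSign_mul_sub_affine hab hsum hdiff hf γ δ]
  exact integral_mul_le_integral_abs (measurable_middleSign a b).aestronglyMeasurable
    (ae_of_all _ fun x ↦ (abs_middleSign a b x).le)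
    (hf.sub (Continuous.integrableOn_Ioc (by fun_prop)))

theorem integral_abs_sub_affine_eq_of_convexOn_of_interpolates (hab : a < b)
    (hsum : a + b = u + v) (hdiff : 2 * (b - a) = v - u) (hf : ConvexOn ℝ (Icc u v) f) {α β : ℝ}
    (ha : α * a + β = f a) (hb : α * b + β = f b) :
    ∫ x in Ioc u v, |f x - (α * x + β)| = ∫ x in Ioc u v, middleSign a b x * f x := by
  rw [← setIntegral_middleSign_mul_sub_affine hab.le hsum hdiff
    (integrableOn_Ioc_of_convexOn_Icc hf) α β]
  refine setIntegral_congr_fun measurableSet_Ioc fun x hx ↦ Eq.symm ?_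
  exact middleSign_mul_eq_abs_of_convexOn (convexOn_sub_affine hf α β)
    ⟨by linarith, by linarith⟩ ⟨by linarith, by linarith⟩ hab
    (sub_eq_zero.2 ha.symm) (sub_eq_zero.2 hb.symm) (Ioc_subset_Icc_self hx)

theorem interpolates_of_integral_abs_sub_affine_eq (hab : a < b) (hsum : a + b = u + v)
    (hdiff : 2 * (b - a) = v - u) (hint : IntegrableOn f (Ioc u v))
    (hcont : ContinuousOn f (Ioo u v)) {γ δ : ℝ}
    (heq : ∫ x in Ioc u v, |f x - (γ * x + δ)| = ∫ x in Ioc u v, middleSign a b x * f x) :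
    γ * a + δ = f a ∧ γ * b + δ = f b := by
  rw [← setIntegral_middleSign_mul_sub_affine hab.le hsum hdiff hint γ δ] at heq
  have hsign := (integral_mul_eq_integral_abs_iff
    (measurable_middleSign a b).aestronglyMeasurable
    (ae_of_all _ fun x ↦ (abs_middleSign a b x).le)
    (hint.sub (Continuous.integrableOn_Ioc (by fun_prop)))).1 heq.symm
  obtain ⟨hzero_a, hzero_b⟩ := eq_zero_of_ae_middleSign_mul_eq_abs (by linarith) hab
    (by linarith) (hcont.sub (by fun_prop)) hsign
  exact ⟨(sub_eq_zero.1 hzero_a).symm, (sub_eq_zero.1 hzero_b).symm⟩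

end MiddleSign

theorem strict_convex_best_L1_affine_unique_general {u v : ℝ} (huv : u < v) {f : ℝ → ℝ}
    (hf : ConvexOn ℝ (Icc u v) f) {α β : ℝ}
    (hleft : α * (u + (v - u) / 4) + β = f (u + (v - u) / 4))
    (hright : α * (u + 3 * (v - u) / 4) + β = f (u + 3 * (v - u) / 4)) :
    (∀ γ δ : ℝ, (∫ x in u..v, |f x - (α * x + β)|) ≤ ∫ x in u..v, |f x - (γ * x + δ)|) ∧
      (∀ γ δ : ℝ,
        (∫ x in u..v, |f x - (γ * x + δ)|) = (∫ x in u..v, |f x - (α * x + β)|) →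
        ∀ x, γ * x + δ = α * x + β) := by
  simp only [intervalIntegral.integral_of_le huv.le]
  have hab : u + (v - u) / 4 < u + 3 * (v - u) / 4 := by linarith
  have hsum : u + (v - u) / 4 + (u + 3 * (v - u) / 4) = u + v := by ring
  have hdiff : 2 * (u + 3 * (v - u) / 4 - (u + (v - u) / 4)) = v - u := by ring
  have hint : IntegrableOn f (Ioc u v) := integrableOn_Ioc_of_convexOn_Icc hf
  have hcont : ContinuousOn f (Ioo u v) := interior_Icc (a := u) ▸ hf.continuousOn_interior
  have hattained := integral_abs_sub_affine_eq_of_convexOn_of_interpolates hab hsum hdiff hf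
    hleft hright
  refine ⟨fun γ δ ↦ ?_, fun γ δ heq ↦ ?_⟩
  · rw [hattained]
    exact setIntegral_middleSign_mul_le_integral_abs_sub_affine hab.le hsum hdiff hint γ δ
  · obtain ⟨hleft', hright'⟩ := interpolates_of_integral_abs_sub_affine_eq hab hsum hdiff hint
      hcont (heq.trans hattained)
    exact affine_eq_of_eq_of_eq hab.ne (hleft'.trans hleft.symm) (hright'.trans hright.symm)

/-- For `f` continuous and strictly convex on `[u, v]` (`h = v - u`), the affine function
interpolating `f` at the canonical points `u + h/4` and `u + 3h/4` is the unique minimizer of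
`∫_u^v |f - ℓ|` over all affine functions `ℓ`. -/
theorem strict_convex_best_L1_affine_unique (u v : ℝ) (huv : u < v) (f ℓstar : ℝ → ℝ)
    (hf : ContinuousOn f (Set.Icc u v))
    (hconv : StrictConvexOn ℝ (Set.Icc u v) f)
    (α β : ℝ) (hℓ : ∀ x, ℓstar x = α * x + β)
    (h1 : ℓstar (u + (v - u) / 4) = f (u + (v - u) / 4))
    (h2 : ℓstar (u + 3 * (v - u) / 4) = f (u + 3 * (v - u) / 4)) :
    (∀ γ δ : ℝ, (∫ x in u..v, |f x - ℓstar x|) ≤ ∫ x in u..v, |f x - (γ * x + δ)|) ∧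
      (∀ γ δ : ℝ,
        (∫ x in u..v, |f x - (γ * x + δ)|) = (∫ x in u..v, |f x - ℓstar x|) →
        ∀ x, γ * x + δ = ℓstar x) := by
  obtain rfl : ℓstar = fun x ↦ α * x + β := funext hℓ
  exact strict_convex_best_L1_affine_unique_general huv hconv.convexOn h1 h2
end
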